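/- arXiv:math/0401144 — 2 statements merged into one kernel-verified Lean document; each statement's English description precedes it below -/
import Mathlib

section
/- Let t₀ < t be reals, τ > 0, and let g : ℝ → ℝ be measurable with |g(x)| ≤ M for all x ∈ [t₀, t]. Define the first-order memory functional Φ(s) = (1/(t − t₀)) ∫_{t₀}^{s} exp(−(t − x)²/τ²) · g(x) dx for s ∈ [t₀, t]. Then the second-order memory term satisfies |(1/(t − t₀)) ∫_{t₀}^{t} exp(−(t − s)²/τ²) · Φ(s) ds| ≤ π M τ² / (4 (t − t₀)²). -/
/-!
The Gaussian weight `w x = exp (-(t - x)² / τ²)` is nonnegative, and its integral `G` over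
`[t₀, t]` is at most the half-line Gaussian integral `√π τ / 2` (`gaussian_weight_integral_le`).
Hence `|Φ s| ≤ M G / (t - t₀)` for every `s ∈ [t₀, t]`. Integrating this bound against `w`
produces a second factor `G / (t - t₀)`, and `G² ≤ π τ² / 4`.
-/

open MeasureTheory intervalIntegral Real

lemma gaussian_weight_integral_le (t₀ t : ℝ) (ht : t₀ < t) (τ : ℝ) (hτ : 0 < τ) :
    ∫ x in t₀..t, Real.exp (-(t - x) ^ 2 / τ ^ 2) ≤ √π * τ / 2 := by
  have hb : 0 < (τ ^ 2)⁻¹ := by positivity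
  have h1 : ∀ y : ℝ, Real.exp (-y ^ 2 / τ ^ 2) = Real.exp (-(τ ^ 2)⁻¹ * y ^ 2) := by
    intro y
    congr 1
    ring
  rw [intervalIntegral.integral_comp_sub_left (fun y => Real.exp (-y ^ 2 / τ ^ 2)) t, sub_self,
    integral_of_le (by linarith)]
  simp_rw [h1]
  have h2 : √(π / (τ ^ 2)⁻¹) / 2 = √π * τ / 2 := by
    rw [div_inv_eq_mul, Real.sqrt_mul pi_pos.le, Real.sqrt_sq hτ.le]
  rw [← h2, ← integral_gaussian_Ioi]
  exact setIntegral_mono_set (integrable_exp_neg_mul_sq hb).integrableOn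
    (Filter.Eventually.of_forall fun _ => (Real.exp_pos _).le)
    (Filter.Eventually.of_forall fun _ hx => hx.1)

theorem stmt_10 (t₀ t : ℝ) (ht : t₀ < t) (τ : ℝ) (hτ : 0 < τ) (g : ℝ → ℝ)
    (hg : Measurable g) (M : ℝ) (hM : ∀ x ∈ Set.Icc t₀ t, |g x| ≤ M)
    (Φ : ℝ → ℝ)
    (hΦ : ∀ s, Φ s = (1 / (t - t₀)) * ∫ x in t₀..s, Real.exp (-(t - x) ^ 2 / τ ^ 2) * g x) :
    |(1 / (t - t₀)) * ∫ s in t₀..t, Real.exp (-(t - s) ^ 2 / τ ^ 2) * Φ s|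
      ≤ π * M * τ ^ 2 / (4 * (t - t₀) ^ 2) := by
  have hT : 0 < t - t₀ := sub_pos.2 ht
  have hM0 : 0 ≤ M := (abs_nonneg _).trans (hM t₀ ⟨le_rfl, ht.le⟩)
  have hGle := gaussian_weight_integral_le t₀ t ht τ hτ
  have hwc : Continuous fun x : ℝ => Real.exp (-(t - x) ^ 2 / τ ^ 2) := by fun_prop
  set w : ℝ → ℝ := fun x => Real.exp (-(t - x) ^ 2 / τ ^ 2) with hw
  have hw0 : ∀ x, 0 ≤ w x := fun x => (Real.exp_pos _).le
  set G : ℝ := ∫ x in t₀..t, w x with hG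
  have hG0 : 0 ≤ G := intervalIntegral.integral_nonneg ht.le fun x _ => hw0 x
  have hΦb : ∀ s ∈ Set.Ioc t₀ t, |Φ s| ≤ 1 / (t - t₀) * (G * M) := by
    intro s hs
    rw [hΦ s, abs_mul, abs_of_pos (one_div_pos.2 hT)]
    gcongr
    calc |∫ x in t₀..s, w x * g x| ≤ ∫ x in t₀..s, w x * M := by
          rw [← Real.norm_eq_abs]
          refine intervalIntegral.norm_integral_le_of_norm_le hs.1.le
            (Filter.Eventually.of_forall fun x hx => ?_)
            (Continuous.intervalIntegrable (by fun_prop) _ _)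
          rw [Real.norm_eq_abs, abs_mul, abs_of_nonneg (hw0 x)]
          exact mul_le_mul_of_nonneg_left (hM x ⟨hx.1.le, hx.2.trans hs.2⟩) (hw0 x)
      _ = (∫ x in t₀..s, w x) * M := intervalIntegral.integral_mul_const _ _
      _ ≤ G * M := by
          refine mul_le_mul_of_nonneg_right ?_ hM0
          exact intervalIntegral.integral_mono_interval le_rfl hs.1.le hs.2
            (Filter.Eventually.of_forall hw0) (hwc.intervalIntegrable _ _)
  have hI : |∫ s in t₀..t, w s * Φ s| ≤ G * (1 / (t - t₀) * (G * M)) := by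
    rw [hG, ← intervalIntegral.integral_mul_const, ← Real.norm_eq_abs]
    refine intervalIntegral.norm_integral_le_of_norm_le ht.le
      (Filter.Eventually.of_forall fun x hx => ?_)
      (Continuous.intervalIntegrable (by fun_prop) _ _)
    rw [Real.norm_eq_abs, abs_mul, abs_of_nonneg (hw0 x)]
    exact mul_le_mul_of_nonneg_left (hΦb x hx) (hw0 x)
  have hG2 : G ^ 2 ≤ π * τ ^ 2 / 4 := by
    calc G ^ 2 ≤ (√π * τ / 2) ^ 2 := by gcongr
      _ = π * τ ^ 2 / 4 := by
          rw [div_pow, mul_pow, Real.sq_sqrt pi_pos.le]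
          norm_num
  calc |(1 / (t - t₀)) * ∫ s in t₀..t, w s * Φ s|
      = 1 / (t - t₀) * |∫ s in t₀..t, w s * Φ s| := by
        rw [abs_mul, abs_of_pos (one_div_pos.2 hT)]
    _ ≤ 1 / (t - t₀) * (G * (1 / (t - t₀) * (G * M))) := by gcongr
    _ = G ^ 2 * (M / (t - t₀) ^ 2) := by
        field_simp
    _ ≤ π * τ ^ 2 / 4 * (M / (t - t₀) ^ 2) := by gcongr
    _ = π * M * τ ^ 2 / (4 * (t - t₀) ^ 2) := by
        field_simp
end

section
/- Let t₀ < t be reals, τ > 0, and let b : ℝ → ℝ be measurable with |b(s)| ≤ M for all s ∈ [t₀, t]. Then the term dropped when passing from the full volatility to its short-memory asymptotic form satisfies the bound |(1/(t − t₀)) ∫_{t₀}^{t} b(s) · (1/(t − t₀)²) · (∫_{s}^{t} exp(−(t − x)²/τ²) dx) ds| ≤ M τ √π / (2 (t − t₀)²). -/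
open MeasureTheory intervalIntegral Real

/-!
After reflecting `x ↦ t - x`, the inner integral is a part of the half-line Gaussian integral
`∫₀^∞ exp (-x² / τ²) dx = τ √π / 2`, uniformly in `s`. The outer integrand is therefore at most
`M τ √π / (2 (t - t₀)²)` in absolute value, and averaging over `[t₀, t]` preserves this bound.
-/

lemma gaussian_memory_le (s t τ : ℝ) (hst : s ≤ t) (hτ : 0 < τ) :
    ∫ x in s..t, Real.exp (-(t - x) ^ 2 / τ ^ 2) ≤ τ * Real.sqrt π / 2 := by
  have hrefl := intervalIntegral.integral_comp_sub_left (a := s) (b := t)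
    (fun y : ℝ => Real.exp (-y ^ 2 / τ ^ 2)) t
  simp only [sub_self] at hrefl
  have hform : (fun y : ℝ => Real.exp (-y ^ 2 / τ ^ 2))
      = fun y => Real.exp (-(1 / τ ^ 2) * y ^ 2) := by
    funext y
    congr 1
    ring
  have hval : √(π / (1 / τ ^ 2)) = τ * √π := by
    rw [div_div_eq_mul_div, div_one, Real.sqrt_mul pi_pos.le, Real.sqrt_sq hτ.le, mul_comm]
  rw [hrefl, hform, intervalIntegral.integral_of_le (sub_nonneg.2 hst), ← hval,
    ← integral_gaussian_Ioi]
  exact setIntegral_mono_set (integrable_exp_neg_mul_sq (by positivity)).integrableOn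
    (Filter.Eventually.of_forall fun y => (Real.exp_pos _).le)
    Set.Ioc_subset_Ioi_self.eventuallyLE

theorem stmt_11 (t₀ t : ℝ) (ht : t₀ < t) (τ : ℝ) (hτ : 0 < τ) (b : ℝ → ℝ)
    (hb : Measurable b) (M : ℝ) (hM : ∀ s ∈ Set.Icc t₀ t, |b s| ≤ M) :
    |(1 / (t - t₀)) * ∫ s in t₀..t,
        b s * ((1 / (t - t₀) ^ 2) * ∫ x in s..t, Real.exp (-(t - x) ^ 2 / τ ^ 2))|
      ≤ M * τ * Real.sqrt π / (2 * (t - t₀) ^ 2) := by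
  have hT : 0 < t - t₀ := sub_pos.2 ht
  have hM0 : 0 ≤ M := (abs_nonneg _).trans (hM t ⟨ht.le, le_rfl⟩)
  have key := intervalIntegral.norm_integral_le_of_norm_le_const (a := t₀) (b := t)
    (f := fun s => b s * ((1 / (t - t₀) ^ 2) *
      ∫ x in s..t, Real.exp (-(t - x) ^ 2 / τ ^ 2)))
    (C := M * ((1 / (t - t₀) ^ 2) * (τ * Real.sqrt π / 2))) (by
      intro s hs
      rw [Set.uIoc_of_le ht.le] at hs
      have hnn : 0 ≤ ∫ x in s..t, Real.exp (-(t - x) ^ 2 / τ ^ 2) :=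
        intervalIntegral.integral_nonneg hs.2 fun _ _ => (Real.exp_pos _).le
      have hle := gaussian_memory_le s t τ hs.2 hτ
      rw [Real.norm_eq_abs, abs_mul, abs_of_nonneg (mul_nonneg (by positivity) hnn)]
      exact mul_le_mul (hM s ⟨hs.1.le, hs.2⟩)
        (mul_le_mul_of_nonneg_left hle (by positivity)) (mul_nonneg (by positivity) hnn) hM0)
  rw [Real.norm_eq_abs, abs_of_pos hT] at key
  rw [abs_mul, abs_of_pos (one_div_pos.2 hT)]
  refine (mul_le_mul_of_nonneg_left key (one_div_pos.2 hT).le).trans_eq ?_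
  field_simp
end
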